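/- arXiv:2508.04439 — 3 statements merged into one kernel-verified Lean document; each statement's English description precedes it below -/
import Mathlib

section
/- For every j with 1 ≤ j ≤ m, the triple ρ_j is a Jacobian syzygy of f, i.e. ρ_j · ∇f = 0 in S, where · denotes the dot product of triples; equivalently ρ_j ∈ D₀(f) = {(a,b,c) ∈ S³ : a f_x + b f_y + c f_z = 0}. -/
open MvPolynomial

noncomputable abbrev S : Type := MvPolynomial (Fin 3) ℂ

/-- The gradient `∇g = (g_x, g_y, g_z)` of a polynomial `g ∈ S = ℂ[x,y,z]`. -/
noncomputable def grad (g : S) : Fin 3 → S := fun t => pderiv t g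

/-- The syzygy triple `ρ_j = Σ_{i≠j} (∏_{k≠i,j} f_k) (∇f_i × ∇f_j)`
of the 2-form `ω_j = df ∧ df_j/f_j`. -/
noncomputable def rho {m : ℕ} (F : Fin m → S) (j : Fin m) : Fin 3 → S :=
  ∑ i ∈ Finset.univ.erase j,
    (∏ k ∈ (Finset.univ.erase j).erase i, F k) • crossProduct (grad (F i)) (grad (F j))

theorem pderiv_prod_aux {m : ℕ} (F : Fin m → S) (t : Fin 3) (s : Finset (Fin m)) :
    pderiv t (∏ i ∈ s, F i) = ∑ i ∈ s, (∏ k ∈ s.erase i, F k) * pderiv t (F i) := by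
  classical
  induction s using Finset.induction_on with
  | empty => simp
  | insert a s ha ih =>
    rw [Finset.prod_insert ha, Finset.sum_insert ha, Finset.erase_insert ha, Derivation.leibniz, ih,
      smul_eq_mul, smul_eq_mul, Finset.mul_sum, add_comm]
    congr 1
    refine Finset.sum_congr rfl fun i hi => ?_
    have hia : a ≠ i := fun h => ha (h ▸ hi)
    rw [Finset.erase_insert_of_ne hia, Finset.prod_insert (fun h => ha (Finset.mem_of_mem_erase h))]
    ring

theorem rho_eq_cross {m : ℕ} (F : Fin m → S) (j : Fin m) :
    rho F j = crossProduct (grad (∏ k ∈ Finset.univ.erase j, F k)) (grad (F j)) := by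
  have h : grad (∏ k ∈ Finset.univ.erase j, F k) =
      ∑ i ∈ Finset.univ.erase j, (∏ k ∈ (Finset.univ.erase j).erase i, F k) • grad (F i) := by
    funext t
    simp only [grad, pderiv_prod_aux, Finset.sum_apply, Pi.smul_apply, smul_eq_mul]
  rw [h, rho, map_sum, LinearMap.sum_apply]
  refine Finset.sum_congr rfl fun i _ => ?_
  rw [map_smul, LinearMap.smul_apply]

/-- for every `j`, `ρ_j` is a Jacobian syzygy of `f = f_1 ⋯ f_m`,
i.e. `ρ_j ⋅ ∇f = 0`, so `ρ_j ∈ D₀(f)`. -/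
theorem rho_is_jacobian_syzygy (m : ℕ) (hm : 2 ≤ m) (F : Fin m → S) (j : Fin m) :
    ∑ t, rho F j t * pderiv t (∏ i, F i) = 0 := by
  rw [rho_eq_cross, ← Finset.mul_prod_erase Finset.univ F (Finset.mem_univ j)]
  simp only [Fin.sum_univ_three, cross_apply, grad, Derivation.leibniz, smul_eq_mul,
    Matrix.cons_val_zero, Matrix.cons_val_one, Matrix.cons_val]
  ring
end

section
/- Suppose in addition that each f_j is homogeneous of degree e_j, and set d = e_1 + ⋯ + e_m. Then for every j with 1 ≤ j ≤ m one has the identity ρ_j × (x,y,z) = d·(∏_{k≠j} f_k)·∇f_j − e_j·∇f in S³. (This is the statement that the contraction of the 2-form ω_j along the Euler vector field equals d·(f/f_j)·df_j − e_j·df.) -/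
open MvPolynomial

theorem grad_prod_aux {ι : Type*} [DecidableEq ι] (s : Finset ι) (F : ι → S) (t : Fin 3) :
    pderiv t (∏ k ∈ s, F k) = ∑ i ∈ s, (∏ k ∈ s.erase i, F k) * pderiv t (F i) := by
  induction s using Finset.induction_on with
  | empty => simp
  | insert a s ha ih =>
    rw [Finset.prod_insert ha, Finset.sum_insert ha, Finset.erase_insert ha, Derivation.leibniz,
      ih, smul_eq_mul, smul_eq_mul, Finset.mul_sum, add_comm]
    congr 1
    refine Finset.sum_congr rfl fun i hi => ?_
    have hne : a ≠ i := fun h => ha (h ▸ hi)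
    rw [Finset.erase_insert_of_ne hne, Finset.prod_insert (by simp [ha]), mul_assoc]

theorem cross_aux (a b : S) (p q : ℕ) (ha : a.IsHomogeneous p) (hb : b.IsHomogeneous q) :
    crossProduct (crossProduct (grad a) (grad b)) (fun t => (X t : S))
      = ((p : S) * a) • grad b - ((q : S) * b) • grad a := by
  have h1 := ha.sum_X_mul_pderiv
  have h2 := hb.sum_X_mul_pderiv
  simp only [Fin.sum_univ_three, nsmul_eq_mul] at h1 h2
  rw [← h1, ← h2]
  ext1 t
  fin_cases t <;> simp [cross_apply, grad] <;> ring

/-- if each `f_j` is homogeneous of degree `e_j` and `d = e_1 + ⋯ + e_m`, then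
`ρ_j × (x,y,z) = d ⋅ (∏_{k≠j} f_k) ⋅ ∇f_j − e_j ⋅ ∇f` (contraction along the Euler field). -/
theorem rho_cross_euler (m : ℕ) (hm : 2 ≤ m) (F : Fin m → S) (e : Fin m → ℕ)
    (hhom : ∀ j, (F j).IsHomogeneous (e j)) (j : Fin m) :
    crossProduct (rho F j) (fun t => (X t : S))
      = (∑ i, e i) • ((∏ k ∈ Finset.univ.erase j, F k) • grad (F j))
        - (e j) • grad (∏ i, F i) := by
  have hcr : crossProduct (rho F j) (fun t => (X t : S)) =
      ∑ i ∈ Finset.univ.erase j, (∏ k ∈ (Finset.univ.erase j).erase i, F k) •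
        (((e i : S) * F i) • grad (F j) - ((e j : S) * F j) • grad (F i)) := by
    rw [rho, map_sum, LinearMap.sum_apply]
    refine Finset.sum_congr rfl fun i _ => ?_
    rw [map_smul, LinearMap.smul_apply, cross_aux _ _ _ _ (hhom i) (hhom j)]
  rw [hcr]
  ext1 t
  have hj := Finset.mem_univ j
  rw [← Finset.mul_prod_erase _ F hj, ← Finset.add_sum_erase _ e hj]
  simp only [Finset.sum_apply, Pi.smul_apply, Pi.sub_apply]
  simp only [smul_eq_mul, nsmul_eq_mul, grad,
    Derivation.leibniz, grad_prod_aux]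
  push_cast
  have key : ∀ i ∈ Finset.univ.erase j, (∏ k ∈ (Finset.univ.erase j).erase i, F k) *
        ((e i : S) * F i * pderiv t (F j) - (e j : S) * F j * pderiv t (F i)) =
      (e i : S) * ((∏ k ∈ Finset.univ.erase j, F k) * pderiv t (F j)) -
      (e j : S) * F j * ((∏ k ∈ (Finset.univ.erase j).erase i, F k) * pderiv t (F i)) := by
    intro i hi
    rw [← Finset.mul_prod_erase _ F hi]
    ring
  rw [Finset.sum_congr rfl key, Finset.sum_sub_distrib, ← Finset.sum_mul, ← Finset.mul_sum]
  ring
end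

section
/- Assume ℓ(C) = 0, i.e. e_j ≥ 2 for all j. Then the S-module D₀(f) is generated by the set G = {ρ_1, ..., ρ_{m−1}, σ^x, σ^y, σ^z}, and G is a minimal generating set: no element of G lies in the S-submodule of S³ generated by the other m+1 elements of G. In particular C is an (m+2)-syzygy curve with exponents d_1 = ⋯ = d_{m−1} = d−2 and d_m = d_{m+1} = d_{m+2} = d−1. -/
open MvPolynomial

/-- The Jacobian syzygy module `D₀(f) = {(a,b,c) ∈ S³ : a f_x + b f_y + c f_z = 0}`. -/
noncomputable def D0 (f : S) : Submodule S (Fin 3 → S) where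
  carrier := {v | ∑ t, v t * pderiv t f = 0}
  add_mem' {a b} ha hb := by
    simp only [Set.mem_setOf_eq, Pi.add_apply, add_mul, Finset.sum_add_distrib] at *
    rw [ha, hb, add_zero]
  zero_mem' := by simp
  smul_mem' c v hv := by
    simp only [Set.mem_setOf_eq, Pi.smul_apply, smul_eq_mul, mul_assoc, ← Finset.mul_sum] at *
    rw [hv, mul_zero]

/-- The syzygy triple `σ^x = (0, f_z, −f_y)` of the 2-form `df ∧ dx`. -/
noncomputable def sigx (f : S) : Fin 3 → S := ![0, pderiv 2 f, -pderiv 1 f]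
/-- The syzygy triple `σ^y = (−f_z, 0, f_x)` of the 2-form `df ∧ dy`. -/
noncomputable def sigy (f : S) : Fin 3 → S := ![-pderiv 2 f, 0, pderiv 0 f]
/-- The syzygy triple `σ^z = (f_y, −f_x, 0)` of the 2-form `df ∧ dz`. -/
noncomputable def sigz (f : S) : Fin 3 → S := ![pderiv 1 f, -pderiv 0 f, 0]

/-- The candidate generating set `G = {ρ_1, …, ρ_{m−1}, σ^x, σ^y, σ^z}` (case `ℓ(C) = 0`). -/
noncomputable def G0 {m : ℕ} (F : Fin m → S) : (Fin (m - 1) ⊕ Fin 3) → (Fin 3 → S) :=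
  Sum.elim (fun j => rho F (Fin.castLE (Nat.sub_le m 1) j))
    ![sigx (∏ i, F i), sigy (∏ i, F i), sigz (∏ i, F i)]


open scoped Matrix

lemma X_dvd_of_dvd_X_mul {s t : Fin 3} (hst : s ≠ t) {u : S} (h : (X t : S) ∣ X s * u) :
    (X t : S) ∣ u := by
  have hp : Prime (X t : S) := MvPolynomial.X_prime
  rcases hp.dvd_or_dvd h with h | h
  · exact absurd (MvPolynomial.X_dvd_X.mp h) (by simpa using Ne.symm hst)
  · exact h

lemma smul_X_div {ι : Type*} {s t : Fin 3} (hst : s ≠ t) {u v : ι → S}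
    (h : (X s : S) • u = (X t : S) • v) : ∃ q : ι → S, u = (X t : S) • q := by
  have : ∀ i, ∃ q : S, u i = X t * q := fun i =>
    X_dvd_of_dvd_X_mul hst ⟨v i, by simpa using congrFun h i⟩
  choose q hq using this
  exact ⟨q, funext fun i => by simp [hq i]⟩

lemma mem_X01 {c : S} {a b : S} (h : X 2 * c = X 0 * a + X 1 * b) :
    ∃ p q : S, c = X 0 * p + X 1 * q := by
  have key : c ∈ Ideal.span (X '' ({0, 1} : Set (Fin 3)) : Set S) := by
    rw [MvPolynomial.mem_ideal_span_X_image]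
    intro n hn
    have h1 : X 2 * c ∈ Ideal.span (X '' ({0, 1} : Set (Fin 3)) : Set S) := by
      rw [h]
      refine Ideal.add_mem _ (Ideal.mul_mem_right _ _ (Ideal.subset_span ⟨0, by simp, rfl⟩))
        (Ideal.mul_mem_right _ _ (Ideal.subset_span ⟨1, by simp, rfl⟩))
    rw [MvPolynomial.mem_ideal_span_X_image] at h1
    obtain ⟨i, hi, hni⟩ := h1 (Finsupp.single 2 1 + n) (by
      rw [MvPolynomial.mem_support_iff, MvPolynomial.coeff_X_mul]
      exact MvPolynomial.mem_support_iff.mp hn)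
    refine ⟨i, hi, ?_⟩
    rcases hi with rfl | rfl <;> simpa using hni
  rw [Set.image_pair, Ideal.mem_span_pair] at key
  obtain ⟨p, q, h⟩ := key
  exact ⟨p, q, by rw [← h]; ring⟩

lemma koszulX {c01 c02 c12 : S} (h : X 2 * c01 - X 1 * c02 + X 0 * c12 = 0) :
    ∃ p0 p1 p2 : S, c01 = X 0 * p1 - X 1 * p0 ∧ c02 = X 0 * p2 - X 2 * p0 ∧
      c12 = X 1 * p2 - X 2 * p1 := by
  obtain ⟨p1, q, h1⟩ := mem_X01 (c := c01) (a := - c12) (b := c02) (by linear_combination h)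
  have h2 : X 1 * (c02 - X 2 * q) = X 0 * (c12 + X 2 * p1) := by
    rw [h1] at h; linear_combination -h
  obtain ⟨p2, h3⟩ := X_dvd_of_dvd_X_mul (s := 1) (t := 0) (by decide) ⟨_, h2⟩
  refine ⟨-q, p1, p2, by rw [h1]; ring, by linear_combination h3, ?_⟩
  rw [h3] at h2
  have : (X 0 : S) ≠ 0 := MvPolynomial.X_ne_zero 0
  apply mul_left_cancel₀ this
  linear_combination -h2

lemma depthT {ι P : Type*} [AddCommGroup P] [Module S P] [Module.IsTorsionFree S P]
    (φ : (ι → S) →ₗ[S] P) (κ : ι → S) (hκ : κ ≠ 0)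
    (hker : ∀ q, φ q = 0 → ∃ c : S, q = c • κ) (hk0 : φ κ = 0) (w : P)
    (hw : ∀ t : Fin 3, (X t : S) • w ∈ LinearMap.range φ) : w ∈ LinearMap.range φ := by
  choose u hu using hw
  have hc : ∀ s t : Fin 3, ∃ c : S, (X s : S) • u t - (X t : S) • u s = c • κ := by
    intro s t
    apply hker
    rw [map_sub, map_smul, map_smul, hu, hu, smul_comm, sub_self]
  obtain ⟨c01, h01⟩ := hc 0 1
  obtain ⟨c02, h02⟩ := hc 0 2
  obtain ⟨c12, h12⟩ := hc 1 2
  have hco : X 2 * c01 - X 1 * c02 + X 0 * c12 = 0 := by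
    have : (X 2 * c01 - X 1 * c02 + X 0 * c12) • κ = 0 := by
      rw [add_smul, sub_smul, mul_smul, mul_smul, mul_smul, ← h01, ← h02, ← h12]
      ext i : 1
      simp only [Pi.add_apply, Pi.sub_apply, Pi.smul_apply, smul_eq_mul, Pi.zero_apply]
      ring
    exact (smul_eq_zero.mp this).resolve_right hκ
  obtain ⟨p0, p1, p2, e01, e02, e12⟩ := koszulX hco
  have g01 : (X 1 : S) • (u 0 - p0 • κ) = (X 0 : S) • (u 1 - p1 • κ) := by
    rw [e01] at h01
    ext i : 1
    have := congrFun h01 i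
    simp only [Pi.sub_apply, Pi.smul_apply, smul_eq_mul] at this ⊢
    linear_combination -this
  obtain ⟨q, hq⟩ := smul_X_div (s := 1) (t := 0) (by decide) g01
  refine ⟨q, ?_⟩
  have h0 : (X 0 : S) • φ q = (X 0 : S) • w := by
    rw [← map_smul, ← hq, map_sub, map_smul, hk0, smul_zero, sub_zero, hu]
  exact smul_right_injective P (MvPolynomial.X_ne_zero (R := ℂ) (0 : Fin 3)) h0

/-- Nullstellensatz form. -/
lemma X_mem_radical {I : Ideal S} (h : ∀ p : Fin 3 → ℂ, (∀ g ∈ I, eval p g = 0) → p = 0)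
    (t : Fin 3) : (X t : S) ∈ I.radical := by
  rw [← MvPolynomial.vanishingIdeal_zeroLocus_eq_radical (K := ℂ)]
  intro p hp
  have : p = 0 := h p (fun g hg => by simpa [MvPolynomial.aeval_eq_eval] using hp g hg)
  simp [this]

lemma mem_of_colon {M : Type*} [AddCommGroup M] [Module S M] (B : Submodule S M)
    (hB : ∀ w : M, (∀ t : Fin 3, (X t : S) • w ∈ B) → w ∈ B) {I : Ideal S}
    (h : ∀ p : Fin 3 → ℂ, (∀ g ∈ I, eval p g = 0) → p = 0) (w : M)
    (hw : ∀ g ∈ I, g • w ∈ B) : w ∈ B := by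
  have hle : Ideal.span (Set.range (X : Fin 3 → S)) ≤ I.radical := by
    rw [Ideal.span_le]; rintro _ ⟨t, rfl⟩; exact X_mem_radical h t
  obtain ⟨n, hn⟩ := Ideal.exists_pow_le_of_le_radical_of_fg hle (IsNoetherian.noetherian _)
  have key : ∀ n : ℕ, ∀ w : M, (∀ g ∈ Ideal.span (Set.range (X : Fin 3 → S)) ^ n, g • w ∈ B) →
      w ∈ B := by
    intro n
    induction n with
    | zero => intro w hw; simpa using hw 1 (by simp)
    | succ n ih =>
      intro w hw
      apply ih
      intro g hg
      apply hB
      intro t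
      rw [← mul_smul]
      apply hw
      rw [pow_succ']
      exact Ideal.mul_mem_mul (Ideal.subset_span ⟨t, rfl⟩) hg
  exact key n w fun g hg => hw g (hn hg)

lemma isUnit_of_zeros {r : S} (h : ∀ p : Fin 3 → ℂ, eval p r = 0 → p = 0) : IsUnit r := by
  have h' : ∀ t, (X t : S) ∈ (Ideal.span {r}).radical :=
    X_mem_radical fun p hp => h p (hp r (Ideal.subset_span rfl))
  obtain ⟨a, ha⟩ := h' 0
  obtain ⟨b, hb⟩ := h' 1
  rw [Ideal.mem_span_singleton] at ha hb
  have : IsRelPrime ((X 0 : S) ^ a) ((X 1 : S) ^ b) := by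
    apply IsRelPrime.pow
    rw [(MvPolynomial.X_prime (R := ℂ) (i := (0 : Fin 3))).irreducible.isRelPrime_iff_not_dvd]
    intro h
    exact absurd (MvPolynomial.X_dvd_X.mp h) (by simp)
  exact this ha hb

lemma dvd_of_dvd_mul_of_unit_gcd {a : Fin 3 → S} (ha : ∀ r : S, (∀ t, r ∣ a t) → IsUnit r)
    {q r : S} (h : ∀ t, q ∣ r * a t) : q ∣ r := by
  classical
  let _ : GCDMonoid S := UniqueFactorizationMonoid.toGCDMonoid S
  have hu : IsUnit (gcd (a 0) (gcd (a 1) (a 2))) := by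
    apply ha
    intro t
    fin_cases t
    · exact gcd_dvd_left _ _
    · exact (gcd_dvd_right _ _).trans (gcd_dvd_left _ _)
    · exact (gcd_dvd_right _ _).trans (gcd_dvd_right _ _)
  have h1 : q ∣ r * gcd (a 1) (a 2) :=
    (dvd_gcd (h 1) (h 2)).trans (gcd_mul_left' r (a 1) (a 2)).dvd
  have h2 : q ∣ r * gcd (a 0) (gcd (a 1) (a 2)) :=
    (dvd_gcd (h 0) h1).trans (gcd_mul_left' r _ _).dvd
  exact (hu.dvd_mul_right).mp h2

lemma parallel {a v : Fin 3 → S} (ha : ∀ r : S, (∀ t, r ∣ a t) → IsUnit r)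
    (h : ∀ s t, v s * a t = v t * a s) : ∃ c : S, v = c • a := by
  obtain ⟨i, hi⟩ : ∃ i, a i ≠ 0 := by
    by_contra hcon
    push Not at hcon
    exact not_isUnit_zero (ha 0 fun t => by rw [hcon t])
  obtain ⟨c, hc⟩ : a i ∣ v i := dvd_of_dvd_mul_of_unit_gcd ha fun t => ⟨v t, by
    rw [h i t]; ring⟩
  refine ⟨c, funext fun t => mul_left_cancel₀ hi ?_⟩
  have := h t i
  rw [hc] at this
  simp only [Pi.smul_apply, smul_eq_mul]
  linear_combination this

/-- `(f,g)` with `f,g` coprime has no embedded component at the origin. -/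
lemma mem_pair_of_colon {f g : S} (hfg : IsRelPrime f g) (hf : f ≠ 0) {I : Ideal S}
    (h : ∀ p : Fin 3 → ℂ, (∀ g ∈ I, eval p g = 0) → p = 0) (b : S)
    (hw : ∀ c ∈ I, c * b ∈ Ideal.span {f, g}) : b ∈ Ideal.span {f, g} := by
  let φ : (Fin 2 → S) →ₗ[S] S :=
    { toFun := fun q => q 0 * f + q 1 * g
      map_add' := fun q r => by simp only [Pi.add_apply]; ring
      map_smul' := fun c q => by simp only [Pi.smul_apply, smul_eq_mul, RingHom.id_apply]; ring }
  have hφ : ∀ q, φ q = q 0 * f + q 1 * g := fun q => rfl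
  have hr : ∀ b, b ∈ LinearMap.range φ ↔ b ∈ Ideal.span {f, g} := by
    intro b
    rw [Ideal.mem_span_pair]
    constructor
    · rintro ⟨q, rfl⟩; exact ⟨q 0, q 1, rfl⟩
    · rintro ⟨x, y, rfl⟩; exact ⟨![x, y], by simp [hφ]⟩
  rw [← hr]
  refine mem_of_colon (LinearMap.range φ) ?_ h b fun c hc => (hr _).mpr (hw c hc)
  refine depthT φ ![g, -f] ?_ ?_ ?_
  · intro h0
    have := congrFun h0 1
    simp at this
    exact hf this
  · intro q hq
    rw [hφ] at hq
    have h1 : f ∣ g * q 1 := ⟨-q 0, by linear_combination hq⟩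
    obtain ⟨c, hc⟩ := hfg.dvd_of_dvd_mul_left h1
    refine ⟨-c, ?_⟩
    have h0 : q 0 = -c * g := by
      apply mul_left_cancel₀ hf
      rw [hc] at hq
      linear_combination hq
    ext i : 1
    fin_cases i
    · simpa using h0
    · simp [hc]; ring
  · rw [hφ]; simp; ring

/-- Exactness of the Koszul complex of `a` in the middle. -/
lemma koszul_mid {a : Fin 3 → S}
    (h : ∀ p : Fin 3 → ℂ, (∀ t, eval p (a t) = 0) → p = 0) {w : Fin 3 → S}
    (hw : ∑ t, a t * w t = 0) : ∃ u : Fin 3 → S, w = a ⨯₃ u := by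
  have ha : ∀ r : S, (∀ t, r ∣ a t) → IsUnit r := by
    intro r hr
    refine isUnit_of_zeros fun p hp => h p fun t => ?_
    obtain ⟨c, hc⟩ := hr t
    rw [hc, map_mul, hp, zero_mul]
  have ha0 : a ≠ 0 := by
    rintro rfl
    exact not_isUnit_zero (ha 0 fun t => by simp)
  have hI : ∀ p : Fin 3 → ℂ, (∀ g ∈ Ideal.span (Set.range a), eval p g = 0) → p = 0 :=
    fun p hp => h p fun t => hp _ (Ideal.subset_span ⟨t, rfl⟩)
  have : w ∈ LinearMap.range (crossProduct a) := by
    refine mem_of_colon _ ?_ hI w ?_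
    · refine depthT _ a ha0 ?_ (cross_self a)
      intro q hq
      apply parallel ha
      have e0 := congrFun hq 0
      have e1 := congrFun hq 1
      have e2 := congrFun hq 2
      simp [cross_apply] at e0 e1 e2
      intro s t
      fin_cases s <;> fin_cases t <;> simp <;> first
        | ring1
        | linear_combination e0
        | linear_combination -e0
        | linear_combination e1
        | linear_combination -e1
        | linear_combination e2
        | linear_combination -e2
    · intro g hg
      refine Submodule.span_induction (p := fun g _ => g • w ∈ LinearMap.range (crossProduct a))
        ?_ ?_ ?_ ?_ hg
      · rintro _ ⟨t, rfl⟩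
        refine ⟨w ⨯₃ (Pi.single t 1), ?_⟩
        rw [Fin.sum_univ_three] at hw
        ext i : 1
        fin_cases t <;> fin_cases i <;> simp [cross_apply] <;> first
          | ring1
          | linear_combination hw
          | linear_combination -hw
      · simp
      · intro x y _ _ hx hy
        rw [add_smul]; exact Submodule.add_mem _ hx hy
      · intro c x _ hx
        rw [smul_assoc]; exact Submodule.smul_mem _ _ hx
  obtain ⟨u, hu⟩ := this
  exact ⟨u, hu.symm⟩

/-- de Rham division modulo `g`. -/
lemma division_mod {g : S} (hg : g ≠ 0) {a : Fin 3 → S}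
    (h : ∀ p : Fin 3 → ℂ, (∀ t, eval p (a t) = 0) → p = 0) {η : Fin 3 → S}
    (hη : ∀ t, g ∣ (η ⨯₃ a) t) : ∃ (b : S) (η' : Fin 3 → S), η = b • a + g • η' := by
  choose w hw using hη
  have hw' : η ⨯₃ a = g • w := funext fun t => by simp [hw t]
  have h0 : ∑ t, a t * w t = 0 := by
    apply mul_left_cancel₀ hg
    have := dot_cross_self η a
    rw [hw'] at this
    simp only [dotProduct, Fin.sum_univ_three, Pi.smul_apply, smul_eq_mul] at this ⊢
    linear_combination this
  obtain ⟨u, hu⟩ := koszul_mid h h0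
  have ha : ∀ r : S, (∀ t, r ∣ a t) → IsUnit r := by
    intro r hr
    refine isUnit_of_zeros fun p hp => h p fun t => ?_
    obtain ⟨c, hc⟩ := hr t
    rw [hc, map_mul, hp, zero_mul]
  have hq : (η + g • u) ⨯₃ a = 0 := by
    rw [map_add, LinearMap.add_apply, hw', hu, map_smul, LinearMap.smul_apply, ← smul_add,
      cross_anticomm', smul_zero]
  obtain ⟨b, hb⟩ := parallel (v := η + g • u) ha (by
      have e0 := congrFun hq 0
      have e1 := congrFun hq 1
      have e2 := congrFun hq 2
      simp [cross_apply] at e0 e1 e2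
      intro s t
      fin_cases s <;> fin_cases t <;> simp <;> first
        | ring1
        | linear_combination e0
        | linear_combination -e0
        | linear_combination e1
        | linear_combination -e1
        | linear_combination e2
        | linear_combination -e2)
  exact ⟨b, -u, by rw [← hb]; simp⟩

/-- The hypotheses on the curve. -/
structure Arr {m : ℕ} (F : Fin m → S) : Prop where
  smooth : ∀ j, ∀ p : Fin 3 → ℂ, (∀ t, eval p (pderiv t (F j)) = 0) → p = 0
  nc : ∀ i j : Fin m, i ≠ j → ∀ p : Fin 3 → ℂ, p ≠ 0 →
      eval p (F i) = 0 → eval p (F j) = 0 →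
      LinearIndependent ℂ
        ![fun t => eval p (pderiv t (F i)), fun t => eval p (pderiv t (F j))]
  triple : ∀ i j k : Fin m, i ≠ j → i ≠ k → j ≠ k → ∀ p : Fin 3 → ℂ, p ≠ 0 →
      ¬(eval p (F i) = 0 ∧ eval p (F j) = 0 ∧ eval p (F k) = 0)

namespace Arr

variable {m : ℕ} {F : Fin m → S}

lemma ne_zero (h : Arr F) (j : Fin m) : F j ≠ 0 := by
  intro h0
  have := h.smooth j (fun _ => 1) (fun t => by simp [h0])
  exact one_ne_zero (congrFun this 0)

lemma unit_grad (h : Arr F) (j : Fin m) (r : S) (hr : ∀ t, r ∣ grad (F j) t) : IsUnit r := by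
  refine isUnit_of_zeros fun p hp => h.smooth j p fun t => ?_
  obtain ⟨c, hc⟩ := hr t
  rw [grad] at hc
  rw [hc, map_mul, hp, zero_mul]

lemma coprime (h : Arr F) {i j : Fin m} (hij : i ≠ j) : IsRelPrime (F i) (F j) := by
  rintro r ⟨s, hs⟩ ⟨t, ht⟩
  refine isUnit_of_zeros fun p hp => ?_
  by_contra hp0
  have hli := h.nc i j hij p hp0 (by rw [hs, map_mul, hp, zero_mul])
    (by rw [ht, map_mul, hp, zero_mul])
  rw [LinearIndependent.pair_iff] at hli
  have hz := hli (eval p t) (-eval p s) (by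
    funext k
    simp only [hs, ht, Derivation.leibniz, smul_eq_mul, map_add, map_mul, hp, Pi.add_apply,
      Pi.smul_apply, Pi.zero_apply]
    ring)
  apply hp0
  refine h.smooth i p fun k => ?_
  have hs0 : eval p s = 0 := by simpa using hz.2
  simp only [hs, Derivation.leibniz, smul_eq_mul, map_add, map_mul, hp, hs0]
  ring

lemma coprime_prod (h : Arr F) {j : Fin m} {s : Finset (Fin m)} (hj : j ∉ s) :
    IsRelPrime (F j) (∏ k ∈ s, F k) := by
  classical
  induction s using Finset.induction_on with
  | empty => simpa using isRelPrime_one_right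
  | insert a s ha ih =>
    rw [Finset.prod_insert ha]
    simp only [Finset.mem_insert, not_or] at hj
    exact (h.coprime hj.1).mul_right (ih hj.2)

/-- Logarithmic one-forms are generated by the `df_j / f_j` and the regular forms. -/
lemma log_forms (h : Arr F) (s : Finset (Fin m)) : ∀ η : Fin 3 → S,
    (∀ j ∈ s, ∀ t, F j ∣ (η ⨯₃ grad (F j)) t) →
    ∃ (a : Fin m → S) (θ : Fin 3 → S),
      η = ∑ j ∈ s, (a j * ∏ k ∈ s.erase j, F k) • grad (F j) + (∏ k ∈ s, F k) • θ := by
  classical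
  induction s using Finset.induction_on with
  | empty => intro η _; exact ⟨0, η, by simp⟩
  | insert i s hi ih =>
    intro η hη
    obtain ⟨b, η', hb⟩ := division_mod (h.ne_zero i) (a := grad (F i)) (h.smooth i)
      (hη i (Finset.mem_insert_self i s))
    have hne : ∀ j ∈ s, i ≠ j := fun j hj hij => hi (hij ▸ hj)
    -- b is in every (f_i, f_j)
    have hbj : ∀ j ∈ s, b ∈ Ideal.span {F i, F j} := by
      intro j hj
      have hij := hne j hj
      refine mem_pair_of_colon (h.coprime hij) (h.ne_zero i)
        (I := Ideal.span ({F i, F j} ∪ Set.range (grad (F i) ⨯₃ grad (F j)))) ?_ b ?_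
      · intro p hp
        by_contra hp0
        have hli := h.nc i j hij p hp0 (hp _ (Ideal.subset_span (by simp)))
          (hp _ (Ideal.subset_span (by simp)))
        rw [← crossProduct_ne_zero_iff_linearIndependent] at hli
        apply hli
        have hx : ∀ t, eval p ((grad (F i) ⨯₃ grad (F j)) t) = 0 := fun t =>
          hp _ (Ideal.subset_span (Or.inr ⟨t, rfl⟩))
        have h0 := hx 0
        have h1 := hx 1
        have h2 := hx 2
        simp only [cross_apply, grad] at h0 h1 h2 ⊢
        ext t
        fin_cases t
        · simpa using h0
        · simpa using h1
        · simpa using h2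
      · intro c hc
        rw [mul_comm]
        refine (show Ideal.span _ ≤ Submodule.comap (LinearMap.mulLeft S b) (Ideal.span {F i, F j}) from
          ?_) hc
        rw [Ideal.span_le]
        rintro c ((rfl | rfl) | ⟨t, rfl⟩)
        · exact Ideal.mul_mem_left _ _ (Ideal.subset_span (by simp))
        · exact Ideal.mul_mem_left _ _ (Ideal.subset_span (by simp))
        · obtain ⟨q, hq⟩ := hη j (Finset.mem_insert_of_mem hj) t
          change b * _ ∈ Ideal.span {F i, F j}
          rw [Ideal.mem_span_pair]
          refine ⟨-(η' ⨯₃ grad (F j)) t, q, ?_⟩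
          rw [hb] at hq
          simp only [map_add, map_smul, LinearMap.add_apply, LinearMap.smul_apply, Pi.add_apply,
            Pi.smul_apply, smul_eq_mul] at hq
          linear_combination -hq
    -- b is in (f_i, P)
    have hbP : ∀ s' ⊆ s, b ∈ Ideal.span {F i, ∏ k ∈ s', F k} := by
      intro s'
      induction s' using Finset.induction_on with
      | empty =>
        intro _
        rw [Ideal.mem_span_pair]
        exact ⟨0, b, by simp⟩
      | insert j s' hj ih' =>
        intro hs
        have hjs : j ∈ s := hs (Finset.mem_insert_self _ _)
        have hs' : s' ⊆ s := (Finset.subset_insert _ _).trans hs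
        obtain ⟨α, β, hαβ⟩ := Ideal.mem_span_pair.mp (ih' hs')
        have hβ : β ∈ Ideal.span {F i, F j} := by
          refine mem_pair_of_colon (h.coprime (hne j hjs)) (h.ne_zero i)
            (I := Ideal.span {F i, F j, ∏ k ∈ s', F k}) ?_ β ?_
          · intro p hp
            by_contra hp0
            have hP := hp (∏ k ∈ s', F k) (Ideal.subset_span (by simp))
            rw [map_prod, Finset.prod_eq_zero_iff] at hP
            obtain ⟨k, hk, hk0⟩ := hP
            exact h.triple i j k (hne j hjs) (hne k (hs' hk)) (fun hjk => hj (hjk ▸ hk)) p hp0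
              ⟨hp _ (Ideal.subset_span (by simp)), hp _ (Ideal.subset_span (by simp)), hk0⟩
          · intro c hc
            rw [mul_comm]
            refine (show Ideal.span _ ≤ Submodule.comap (LinearMap.mulLeft S β) (Ideal.span {F i, F j}) from
              ?_) hc
            rw [Ideal.span_le]
            rintro c (rfl | rfl | rfl)
            · exact Ideal.mul_mem_left _ _ (Ideal.subset_span (by simp))
            · exact Ideal.mul_mem_left _ _ (Ideal.subset_span (by simp))
            · change β * _ ∈ Ideal.span {F i, F j}
              have : β * ∏ k ∈ s', F k = b - α * F i := by linear_combination hαβ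
              rw [this]
              exact Ideal.sub_mem _ (hbj j hjs)
                (Ideal.mul_mem_left _ _ (Ideal.subset_span (by simp)))
        obtain ⟨γ, δ, hγδ⟩ := Ideal.mem_span_pair.mp hβ
        rw [Finset.prod_insert hj, Ideal.mem_span_pair]
        refine ⟨α + γ * ∏ k ∈ s', F k, δ, ?_⟩
        rw [← hαβ, ← hγδ]; ring
    obtain ⟨c, a0, hca⟩ := Ideal.mem_span_pair.mp (hbP s subset_rfl)
    have hη2 : η = (a0 * ∏ k ∈ s, F k) • grad (F i) + F i • (η' + c • grad (F i)) := by
      rw [hb, ← hca, add_smul, smul_add, smul_smul, mul_comm c]; abel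
    obtain ⟨a, θ, haθ⟩ := ih (η' + c • grad (F i)) (by
      intro j hj t
      have h1 := hη j (Finset.mem_insert_of_mem hj) t
      rw [hη2] at h1
      simp only [map_add, map_smul, LinearMap.add_apply, LinearMap.smul_apply, Pi.add_apply,
        Pi.smul_apply, smul_eq_mul] at h1 ⊢
      have h2 : F j ∣ a0 * (∏ k ∈ s, F k) * (grad (F i) ⨯₃ grad (F j)) t :=
        ((Finset.dvd_prod_of_mem F hj).mul_left _).mul_right _
      have h3 := (dvd_add_right h2).mp h1
      exact (h.coprime (hne j hj).symm).dvd_of_dvd_mul_left h3)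
    refine ⟨Function.update a i a0, θ, ?_⟩
    rw [Finset.sum_insert hi, Finset.prod_insert hi, Finset.erase_insert hi, hη2, haθ, smul_add,
      Finset.smul_sum, Function.update_self, add_assoc, smul_smul]
    congr 2
    refine Finset.sum_congr rfl fun j hj => ?_
    rw [Function.update_of_ne (hne j hj).symm, Finset.erase_insert_of_ne (hne j hj),
      Finset.prod_insert (fun hh => hi (Finset.mem_of_mem_erase hh)), smul_smul]
    congr 1
    ring

end Arr

lemma cross_cross_coord (x v a : Fin 3 → S) (t : Fin 3) :
    ((x ⨯₃ v) ⨯₃ a) t = v t * (∑ k, x k * a k) - x t * (∑ k, v k * a k) := by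
  simp only [cross_apply, Fin.sum_univ_three]
  fin_cases t <;> simp <;> ring

lemma parallel_of_cross {a v : Fin 3 → S} (ha : ∀ r : S, (∀ t, r ∣ a t) → IsUnit r)
    (h : a ⨯₃ v = 0) : ∃ c : S, v = c • a := by
  apply parallel ha
  have e0 := congrFun h 0
  have e1 := congrFun h 1
  have e2 := congrFun h 2
  simp [cross_apply] at e0 e1 e2
  intro s t
  fin_cases s <;> fin_cases t <;> simp <;> first
    | ring1
    | linear_combination e0
    | linear_combination -e0
    | linear_combination e1
    | linear_combination -e1
    | linear_combination e2
    | linear_combination -e2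

lemma cross_eq_sig (f : S) (θ : Fin 3 → S) :
    grad f ⨯₃ θ = θ 0 • sigx f + θ 1 • sigy f + θ 2 • sigz f := by
  ext t : 1
  fin_cases t <;> simp [cross_apply, grad, sigx, sigy, sigz] <;> ring

section

variable {m : ℕ} {F : Fin m → S}

lemma grad_prod (F : Fin m → S) (s : Finset (Fin m)) :
    grad (∏ k ∈ s, F k) = ∑ j ∈ s, (∏ k ∈ s.erase j, F k) • grad (F j) := by
  classical
  induction s using Finset.induction_on with
  | empty => ext t : 1; simp [grad]
  | insert i s hi ih =>
    rw [Finset.sum_insert hi, Finset.prod_insert hi, Finset.erase_insert hi]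
    have h1 : grad (F i * ∏ k ∈ s, F k)
        = (∏ k ∈ s, F k) • grad (F i) + F i • grad (∏ k ∈ s, F k) := by
      ext t : 1
      simp only [grad, Derivation.leibniz, smul_eq_mul, Pi.add_apply, Pi.smul_apply]
      ring
    rw [h1, ih, Finset.smul_sum]
    congr 1
    refine Finset.sum_congr rfl fun j hj => ?_
    have hij : i ≠ j := fun hij => hi (hij ▸ hj)
    rw [Finset.erase_insert_of_ne hij,
      Finset.prod_insert (fun hh => hi (Finset.mem_of_mem_erase hh)), smul_smul]

lemma rho_smul (F : Fin m → S) (j : Fin m) :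
    F j • rho F j = grad (∏ i, F i) ⨯₃ grad (F j) := by
  rw [grad_prod, map_sum, LinearMap.sum_apply, rho, Finset.smul_sum,
    ← Finset.add_sum_erase Finset.univ _ (Finset.mem_univ j), map_smul, LinearMap.smul_apply,
    cross_self, smul_zero, zero_add]
  refine Finset.sum_congr rfl fun i hi => ?_
  have hij : j ≠ i := (Finset.ne_of_mem_erase hi).symm
  rw [map_smul, LinearMap.smul_apply, smul_smul, Finset.erase_right_comm,
    Finset.mul_prod_erase _ _ (Finset.mem_erase.mpr ⟨hij, Finset.mem_univ j⟩)]

lemma comb (F : Fin m → S) (a : Fin m → S) (θ : Fin 3 → S) :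
    (∏ i, F i) • (∑ j, a j • rho F j + grad (∏ i, F i) ⨯₃ θ) =
      grad (∏ i, F i) ⨯₃ (∑ j, (a j * ∏ k ∈ Finset.univ.erase j, F k) • grad (F j)
        + (∏ i, F i) • θ) := by
  rw [map_add, map_smul, map_sum, smul_add, Finset.smul_sum]
  congr 1
  refine Finset.sum_congr rfl fun j _ => ?_
  rw [map_smul, ← rho_smul, smul_smul, smul_smul, ← Finset.mul_prod_erase _ F (Finset.mem_univ j)]
  congr 1
  ring

lemma sum_rho (h : Arr F) : ∑ j, rho F j = 0 := by
  have h1 := comb F 1 0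
  simp only [Pi.one_apply, one_smul, one_mul, map_zero, add_zero, smul_zero] at h1
  rw [← grad_prod, cross_self] at h1
  exact (smul_eq_zero.mp h1).resolve_left (Finset.prod_ne_zero_iff.mpr fun j _ => h.ne_zero j)

lemma rho_mem (h : Arr F) (j : Fin m) : rho F j ∈ D0 (∏ i, F i) := by
  change ∑ t, rho F j t * pderiv t (∏ i, F i) = 0
  apply mul_left_cancel₀ (h.ne_zero j)
  have h1 := dot_self_cross (grad (∏ i, F i)) (grad (F j))
  rw [← rho_smul, dotProduct] at h1
  rw [mul_zero, ← h1, Finset.mul_sum]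
  refine Finset.sum_congr rfl fun t _ => ?_
  simp only [grad, Pi.smul_apply, smul_eq_mul]
  ring

lemma cross_mem (f : S) (θ : Fin 3 → S) : grad f ⨯₃ θ ∈ D0 f := by
  change ∑ t, (grad f ⨯₃ θ) t * pderiv t f = 0
  have h1 := dot_self_cross (grad f) θ
  rw [dotProduct] at h1
  rw [← h1]
  exact Finset.sum_congr rfl fun t _ => mul_comm _ _

lemma dvd_of_mem_D0 (h : Arr F) {v : Fin 3 → S} (hv : v ∈ D0 (∏ i, F i)) (j : Fin m) :
    F j ∣ ∑ k, v k * grad (F j) k := by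
  have h0 : ∑ t, v t * grad (∏ i, F i) t = 0 := hv
  have h1 : ∑ i, (∏ k ∈ Finset.univ.erase i, F k) * ∑ t, v t * grad (F i) t = 0 := by
    rw [← h0, grad_prod]
    simp only [Finset.sum_apply, Pi.smul_apply, smul_eq_mul, Finset.mul_sum]
    rw [Finset.sum_comm]
    refine Finset.sum_congr rfl fun t _ => Finset.sum_congr rfl fun i _ => by ring
  rw [← Finset.add_sum_erase Finset.univ _ (Finset.mem_univ j)] at h1
  have h2 : F j ∣ ∑ i ∈ Finset.univ.erase j,
      (∏ k ∈ Finset.univ.erase i, F k) * ∑ t, v t * grad (F i) t := by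
    refine Finset.dvd_sum fun i hi => Dvd.dvd.mul_right (Finset.dvd_prod_of_mem F ?_) _
    exact Finset.mem_erase.mpr ⟨(Finset.ne_of_mem_erase hi).symm, Finset.mem_univ j⟩
  have h3 : F j ∣ (∏ k ∈ Finset.univ.erase j, F k) * ∑ t, v t * grad (F j) t := by
    rw [eq_neg_of_add_eq_zero_left h1]
    exact h2.neg_right
  exact (h.coprime_prod (Finset.notMem_erase j _)).dvd_of_dvd_mul_left h3

lemma generation (h : Arr F) (hm : 0 < m) {e : Fin m → ℕ} (he : ∀ j, 2 ≤ e j)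
    (hhom : ∀ j, (F j).IsHomogeneous (e j)) {v : Fin 3 → S} (hv : v ∈ D0 (∏ i, F i)) :
    ∃ (a : Fin m → S) (θ : Fin 3 → S), v = ∑ j, a j • rho F j + grad (∏ i, F i) ⨯₃ θ := by
  have hf0 : (∏ i, F i) ≠ 0 := Finset.prod_ne_zero_iff.mpr fun j _ => h.ne_zero j
  have hE : ∀ j, ∑ k, (X k : S) * grad (F j) k = e j • F j := fun j =>
    (hhom j).sum_X_mul_pderiv
  have hEf : ∑ k, (X k : S) * grad (∏ i, F i) k = (∑ i, e i) • ∏ i, F i :=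
    (MvPolynomial.IsHomogeneous.prod _ _ _ fun j _ => hhom j).sum_X_mul_pderiv
  have hd : ((∑ i, e i : ℕ) : ℂ) ≠ 0 := by
    have : e ⟨0, hm⟩ ≤ ∑ i, e i := Finset.single_le_sum (fun _ _ => Nat.zero_le _)
      (Finset.mem_univ _)
    have := he ⟨0, hm⟩
    exact_mod_cast (by omega : (∑ i, e i) ≠ 0)
  obtain ⟨a, θ, hη⟩ := h.log_forms Finset.univ ((fun t => (X t : S)) ⨯₃ v) (by
    intro j _ t
    rw [cross_cross_coord, hE]
    refine dvd_sub ?_ ((dvd_of_mem_D0 h hv j).mul_left _)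
    exact Dvd.dvd.mul_left (by rw [nsmul_eq_mul]; exact dvd_mul_left _ _) _)
  have h1 := comb F a θ
  rw [← hη] at h1
  have h2 : ((fun t => (X t : S)) ⨯₃ v) ⨯₃ grad (∏ i, F i)
      = (∏ i, F i) • ((C ((∑ i, e i : ℕ) : ℂ) : S) • v) := by
    ext t : 1
    rw [cross_cross_coord, hEf]
    have : ∑ k, v k * grad (∏ i, F i) k = 0 := hv
    rw [this]
    simp only [Pi.smul_apply, smul_eq_mul, nsmul_eq_mul, map_natCast]
    ring
  rw [← cross_anticomm ((fun t => (X t : S)) ⨯₃ v), h2, ← smul_neg] at h1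
  have h3 := smul_right_injective _ hf0 h1
  set c : ℂ := ((∑ i, e i : ℕ) : ℂ)
  refine ⟨fun j => - C c⁻¹ * a j, (- C c⁻¹ : S) • θ, ?_⟩
  simp only [mul_smul]
  rw [← Finset.smul_sum, map_smul, ← smul_add, h3, neg_smul, smul_neg, neg_neg, smul_smul,
    ← map_mul, inv_mul_cancel₀ hd, map_one, one_smul]

lemma unit_grad_prod (h : Arr F) (hm : 0 < m) {e : Fin m → ℕ} (he : ∀ j, 2 ≤ e j)
    (hhom : ∀ j, (F j).IsHomogeneous (e j)) (r : S)
    (hr : ∀ t, r ∣ grad (∏ i, F i) t) : IsUnit r := by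
  have hf0 : (∏ i, F i) ≠ 0 := Finset.prod_ne_zero_iff.mpr fun j _ => h.ne_zero j
  have hEf : ∑ k, (X k : S) * grad (∏ i, F i) k = (∑ i, e i) • ∏ i, F i :=
    (MvPolynomial.IsHomogeneous.prod _ _ _ fun j _ => hhom j).sum_X_mul_pderiv
  have hd : ((∑ i, e i : ℕ) : ℂ) ≠ 0 := by
    have : e ⟨0, hm⟩ ≤ ∑ i, e i := Finset.single_le_sum (fun _ _ => Nat.zero_le _)
      (Finset.mem_univ _)
    have := he ⟨0, hm⟩
    exact_mod_cast (by omega : (∑ i, e i) ≠ 0)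
  have hrf : r ∣ ∏ i, F i := by
    have h1 : r ∣ (C ((∑ i, e i : ℕ) : ℂ) : S) * ∏ i, F i := by
      rw [map_natCast, ← nsmul_eq_mul, ← hEf]
      exact Finset.dvd_sum fun k _ => (hr k).mul_left _
    have hu : IsUnit (C ((∑ i, e i : ℕ) : ℂ) : S) := (isUnit_iff_ne_zero.mpr hd).map C
    exact hu.dvd_mul_left.mp h1
  by_contra hru
  obtain ⟨q, hq, hqr⟩ := WfDvdMonoid.exists_irreducible_factor hru
    (fun h0 => hf0 (by rw [h0] at hrf; exact zero_dvd_iff.mp hrf))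
  have hqp : Prime q := hq.prime
  obtain ⟨j, _, hj⟩ := hqp.exists_mem_finset_dvd (hqr.trans hrf)
  apply hq.not_isUnit
  refine h.unit_grad j q fun t => ?_
  have h1 := hqr.trans (hr t)
  rw [grad_prod, Finset.sum_apply, ← Finset.add_sum_erase Finset.univ _ (Finset.mem_univ j)] at h1
  have h2 : q ∣ ∑ i ∈ Finset.univ.erase j,
      ((∏ k ∈ Finset.univ.erase i, F k) • grad (F i)) t := by
    refine Finset.dvd_sum fun i hi => Dvd.dvd.mul_right (hj.trans (Finset.dvd_prod_of_mem F ?_)) _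
    exact Finset.mem_erase.mpr ⟨(Finset.ne_of_mem_erase hi).symm, Finset.mem_univ j⟩
  have h3 := (dvd_add_left h2).mp h1
  rcases hqp.dvd_or_dvd h3 with h4 | h4
  · exact absurd (h.coprime_prod (Finset.notMem_erase j Finset.univ) hj h4) hq.not_isUnit
  · exact h4

lemma constantCoeff_hom {g : S} {n : ℕ} (hg : g.IsHomogeneous n) (hn : n ≠ 0) :
    constantCoeff g = 0 := by
  rw [MvPolynomial.constantCoeff_eq]
  exact hg.coeff_eq_zero (by simpa using hn.symm)

set_option maxHeartbeats 1000000 in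
lemma relation (h : Arr F) (hm : 0 < m) {e : Fin m → ℕ} (he : ∀ j, 2 ≤ e j)
    (hhom : ∀ j, (F j).IsHomogeneous (e j)) {s : Fin m → S} {θ : Fin 3 → S}
    {j0 : Fin m} (hj0 : s j0 = 0)
    (hrel : ∑ j, s j • rho F j + grad (∏ i, F i) ⨯₃ θ = 0) :
    (∀ j, constantCoeff (s j) = 0) ∧ ∀ t, constantCoeff (θ t) = 0 := by
  have hf0 : (∏ i, F i) ≠ 0 := Finset.prod_ne_zero_iff.mpr fun j _ => h.ne_zero j
  have h1 := comb F s θ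
  rw [hrel, smul_zero] at h1
  obtain ⟨c, hc⟩ := parallel_of_cross (unit_grad_prod h hm he hhom) h1.symm
  have h2 : ∑ j, ((s j - c) * ∏ k ∈ Finset.univ.erase j, F k) • grad (F j)
      + (∏ i, F i) • θ = 0 := by
    rw [grad_prod, Finset.smul_sum, ← sub_eq_zero] at hc
    rw [← hc, add_sub_right_comm, ← Finset.sum_sub_distrib]
    congr 1
    refine Finset.sum_congr rfl fun j _ => ?_
    rw [smul_smul, ← sub_smul, sub_mul]
  have h3 : ∀ j, F j ∣ s j - c := by
    intro j
    refine dvd_of_dvd_mul_of_unit_gcd (h.unit_grad j) fun t => ?_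
    have h4 := congrFun h2 t
    rw [Pi.add_apply, Finset.sum_apply,
      ← Finset.add_sum_erase Finset.univ _ (Finset.mem_univ j), Pi.zero_apply, add_assoc] at h4
    have h5 : F j ∣ ∑ i ∈ Finset.univ.erase j,
        (((s i - c) * ∏ k ∈ Finset.univ.erase i, F k) • grad (F i)) t
        + ((∏ i, F i) • θ) t := by
      refine dvd_add (Finset.dvd_sum fun i hi => ?_) ?_
      · refine Dvd.dvd.mul_right (Dvd.dvd.mul_left (Finset.dvd_prod_of_mem F ?_) _) _
        exact Finset.mem_erase.mpr ⟨(Finset.ne_of_mem_erase hi).symm, Finset.mem_univ j⟩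
      · exact Dvd.dvd.mul_right (Finset.dvd_prod_of_mem F (Finset.mem_univ j)) _
    have h6 : F j ∣ (((s j - c) * ∏ k ∈ Finset.univ.erase j, F k) • grad (F j)) t := by
      have h8 := eq_neg_of_add_eq_zero_left h4
      rw [h8]
      exact (dvd_neg (α := S)).mpr h5
    refine (h.coprime_prod (Finset.notMem_erase j Finset.univ)).dvd_of_dvd_mul_left ?_
    have h7 : (∏ k ∈ Finset.univ.erase j, F k) * ((s j - c) * grad (F j) t)
        = (((s j - c) * ∏ k ∈ Finset.univ.erase j, F k) • grad (F j)) t := by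
      rw [Pi.smul_apply, smul_eq_mul]
      ring
    rw [h7]
    exact h6
  choose k hk using h3
  have hF0 : ∀ j, constantCoeff (F j) = 0 := fun j =>
    constantCoeff_hom (hhom j) (by have := he j; omega)
  have hc0 : constantCoeff c = 0 := by
    have := congrArg constantCoeff (hk j0)
    rw [hj0, map_sub, map_mul, hF0] at this
    simpa using this
  refine ⟨fun j => ?_, fun t => ?_⟩
  · have := congrArg constantCoeff (hk j)
    rw [map_sub, map_mul, hF0, hc0] at this
    simpa using this
  · have h4 : (∏ i, F i) • (∑ j, k j • grad (F j) + θ) = 0 := by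
      rw [← h2, smul_add, Finset.smul_sum]
      congr 1
      refine Finset.sum_congr rfl fun j _ => ?_
      have h9 : (∏ i, F i) * k j = F j * k j * ∏ l ∈ Finset.univ.erase j, F l := by
        rw [← Finset.mul_prod_erase _ F (Finset.mem_univ j)]
        ring
      rw [smul_smul, hk, h9]
    have h5 := congrFun ((smul_eq_zero.mp h4).resolve_left hf0) t
    have h6 := congrArg constantCoeff h5
    simp only [Pi.add_apply, Finset.sum_apply, Pi.smul_apply, smul_eq_mul, map_add, map_sum,
      map_mul, Pi.zero_apply, map_zero] at h6
    have hg : ∀ j, constantCoeff (grad (F j) t) = 0 := fun j =>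
      constantCoeff_hom (hhom j).pderiv (by have := he j; omega)
    simpa [hg] using h6

end

lemma card_le_of_relations {ι M : Type*} [Fintype ι] [DecidableEq ι] [AddCommGroup M] [Module S M]
    (G : ι → M) (hrel : ∀ c : ι → S, ∑ i, c i • G i = 0 → ∀ i, constantCoeff (c i) = 0)
    (T : Finset M) (hT : Submodule.span S (T : Set M) = Submodule.span S (Set.range G)) :
    Fintype.card ι ≤ T.card := by
  classical
  have h1 : ∀ i, ∃ a : T → S, ∑ t, a t • (t : M) = G i := by
    intro i
    have : G i ∈ Submodule.span S (T : Set M) := by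
      rw [hT]; exact Submodule.subset_span ⟨i, rfl⟩
    have hr : (T : Set M) = Set.range ((↑) : T → M) := by simp
    rw [hr, Submodule.mem_span_range_iff_exists_fun] at this
    exact this
  have h2 : ∀ t : T, ∃ b : ι → S, ∑ i, b i • G i = (t : M) := by
    intro t
    rw [← Submodule.mem_span_range_iff_exists_fun, ← hT]
    exact Submodule.subset_span t.2
  choose a ha using h1
  choose b hb using h2
  let A : Matrix ι T ℂ := fun i t => constantCoeff (a i t)
  let B : Matrix T ι ℂ := fun t i => constantCoeff (b t i)
  have hAB : A * B = 1 := by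
    ext i j
    have h3 : ∑ j, (∑ t, a i t * b t j - if i = j then 1 else 0) • G j = 0 := by
      simp only [sub_smul, Finset.sum_sub_distrib, Finset.sum_smul, mul_smul, ite_smul, one_smul,
        zero_smul, Finset.sum_ite_eq, Finset.mem_univ, if_true]
      rw [Finset.sum_comm]
      simp only [← Finset.smul_sum, hb, ha, sub_self]
    have h4 := hrel _ h3 j
    rw [map_sub, map_sum, sub_eq_zero] at h4
    simp only [map_mul] at h4
    rw [Matrix.mul_apply, Matrix.one_apply]
    change ∑ t, constantCoeff (a i t) * constantCoeff (b t j) = _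
    rw [h4]
    split_ifs <;> simp
  have h5 : (1 : Matrix ι ι ℂ).rank ≤ A.rank := hAB ▸ Matrix.rank_mul_le_left A B
  rw [Matrix.rank_one] at h5
  exact h5.trans (A.rank_le_card_width.trans (by simp))

lemma sum_G0 {n : ℕ} (F : Fin (n + 1) → S) (c : Fin n ⊕ Fin 3 → S) :
    ∑ i, c i • G0 F i = ∑ j : Fin (n + 1), (Fin.snoc (fun j => c (Sum.inl j)) 0 : Fin (n + 1) → S) j
      • rho F j + grad (∏ i, F i) ⨯₃ (fun t => c (Sum.inr t)) := by
  rw [Fintype.sum_sum_type, cross_eq_sig, Fin.sum_univ_three, Fin.sum_univ_castSucc]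
  simp only [Fin.snoc_castSucc, Fin.snoc_last, zero_smul, add_zero]
  rfl

/-- if `ℓ(C) = 0` (all `e_j ≥ 2`), then `D₀(f)` is generated by
`G = {ρ_1, …, ρ_{m−1}, σ^x, σ^y, σ^z}`, this generating set is minimal (no element lies in
the submodule generated by the others), and every generating set of `D₀(f)` has at least
`m + 2` elements, so `C` is an `(m+2)`-syzygy curve with exponents
`d_1 = ⋯ = d_{m−1} = d−2`, `d_m = d_{m+1} = d_{m+2} = d−1`. -/
theorem caseL0_minimal_generators
    (m : ℕ) (hm : 4 ≤ m) (F : Fin m → S) (e : Fin m → ℕ)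
    (he : ∀ j, 1 ≤ e j)
    (hhom : ∀ j, (F j).IsHomogeneous (e j))
    (hsmooth : ∀ j, ∀ p : Fin 3 → ℂ,
      (∀ t, eval p (pderiv t (F j)) = 0) → p = 0)
    (hnc : ∀ i j : Fin m, i ≠ j → ∀ p : Fin 3 → ℂ, p ≠ 0 →
      eval p (F i) = 0 → eval p (F j) = 0 →
      LinearIndependent ℂ
        ![fun t => eval p (pderiv t (F i)), fun t => eval p (pderiv t (F j))])
    (htriple : ∀ i j k : Fin m, i ≠ j → i ≠ k → j ≠ k → ∀ p : Fin 3 → ℂ, p ≠ 0 →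
      ¬(eval p (F i) = 0 ∧ eval p (F j) = 0 ∧ eval p (F k) = 0))
    (hl0 : ∀ j, 2 ≤ e j) :
    D0 (∏ i, F i) = Submodule.span S (Set.range (G0 F)) ∧
    (∀ i : Fin (m - 1) ⊕ Fin 3, G0 F i ∉ Submodule.span S (G0 F '' {i}ᶜ)) ∧
    (∀ T : Finset (Fin 3 → S),
      Submodule.span S (T : Set (Fin 3 → S)) = D0 (∏ i, F i) → m + 2 ≤ T.card) := by
  obtain ⟨n, rfl⟩ : ∃ n, m = n + 1 := ⟨m - 1, by omega⟩
  have h : Arr F := ⟨hsmooth, hnc, htriple⟩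
  have hpos : 0 < n + 1 := Nat.succ_pos n
  have hgen : D0 (∏ i, F i) = Submodule.span S (Set.range (G0 F)) := by
    apply le_antisymm
    · intro v hv
      obtain ⟨a, θ, rfl⟩ := generation h hpos hl0 hhom hv
      have hin : ∀ j : Fin n, rho F j.castSucc ∈ Submodule.span S (Set.range (G0 F)) :=
        fun j => Submodule.subset_span ⟨Sum.inl j, rfl⟩
      refine Submodule.add_mem _ (Submodule.sum_mem _ fun j _ => Submodule.smul_mem _ _ ?_) ?_
      · refine Fin.lastCases ?_ hin j
        have hs := sum_rho h
        rw [Fin.sum_univ_castSucc] at hs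
        rw [eq_neg_of_add_eq_zero_right hs]
        exact Submodule.neg_mem _ (Submodule.sum_mem _ fun j _ => hin j)
      · rw [cross_eq_sig]
        refine Submodule.add_mem _ (Submodule.add_mem _ ?_ ?_) ?_
        · exact Submodule.smul_mem _ _ (Submodule.subset_span ⟨Sum.inr 0, rfl⟩)
        · exact Submodule.smul_mem _ _ (Submodule.subset_span ⟨Sum.inr 1, rfl⟩)
        · exact Submodule.smul_mem _ _ (Submodule.subset_span ⟨Sum.inr 2, rfl⟩)
    · rw [Submodule.span_le]
      rintro _ ⟨j | t, rfl⟩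
      · exact rho_mem h _
      · have := cross_mem (∏ i, F i) (Pi.single t 1)
        rw [cross_eq_sig] at this
        fin_cases t
        · simpa [G0] using this
        · simpa [G0] using this
        · simpa [G0] using this
  have hcount : ∀ T : Finset (Fin 3 → S),
      Submodule.span S (T : Set (Fin 3 → S)) = D0 (∏ i, F i) → n + 1 + 2 ≤ T.card := by
    intro T hT
    have hrel : ∀ c : Fin n ⊕ Fin 3 → S, ∑ i, c i • G0 F i = 0 →
        ∀ i, constantCoeff (c i) = 0 := by
      intro c hc
      rw [sum_G0] at hc
      obtain ⟨h1, h2⟩ := relation h hpos hl0 hhom (j0 := Fin.last n) (by simp) hc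
      rintro (j | t)
      · simpa using h1 j.castSucc
      · exact h2 t
    have := card_le_of_relations (ι := Fin n ⊕ Fin 3) (G0 F) hrel T (hT.trans hgen)
    simpa using this
  refine ⟨hgen, ?_, hcount⟩
  intro i hi
  classical
  let T : Finset (Fin 3 → S) := (Finset.univ.erase i).image (G0 F)
  have hTc : (T : Set (Fin 3 → S)) = G0 F '' {i}ᶜ := by
    simp only [T, Finset.coe_image, Finset.coe_erase, Finset.coe_univ]
    congr 1
    ext x
    simp
  have hT := hcount T (by
    rw [hTc, hgen]
    apply le_antisymm (Submodule.span_mono (Set.image_subset_range _ _))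
    rw [Submodule.span_le]
    rintro _ ⟨k, rfl⟩
    by_cases hk : k = i
    · rw [hk]; exact hi
    · exact Submodule.subset_span ⟨k, hk, rfl⟩)
  have hle : T.card ≤ n + 2 := by
    refine Finset.card_image_le.trans ?_
    rw [Finset.card_erase_of_mem (Finset.mem_univ i), Finset.card_univ]
    simp
  omega
end
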